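/- Consider any run of the multi-level quota method (with arbitrary tie-breaking) on a multi-level apportionment instance. Whenever a node c with parent p has just received a seat — that is, for any g ≥ 1 such that c is among the recipients of the g-th seat — the resulting allocation V^g after g seats satisfies V^g_c / R_c ≥ V^g_p / R_p. -/

import Mathlib

/-- A multi-level apportionment instance: a rooted tree on nodes `0, …, n`
(root `0`, encoded by a parent function with `parent i < i` for `i ≠ 0`),
together with entitlements `W`. -/
structure MLA where
  n : ℕ
  parent : Fin (n + 1) → Fin (n + 1)
  parent_lt : ∀ i : Fin (n + 1), i ≠ 0 → (parent i : ℕ) < (i : ℕ)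
  W : Fin (n + 1) → ℝ
  W_pos : ∀ i, 0 < W i
  W_le_one : ∀ i, W i ≤ 1
  W_root : W 0 = 1
  W_sum : ∀ i : Fin (n + 1),
    (Finset.univ.filter (fun c => c ≠ 0 ∧ parent c = i)).Nonempty →
    ∑ c ∈ Finset.univ.filter (fun c => c ≠ 0 ∧ parent c = i), W c = 1

namespace MLA

variable (T : MLA)

/-- The set of children of node `i`. -/
def children (i : Fin (T.n + 1)) : Finset (Fin (T.n + 1)) :=
  Finset.univ.filter (fun c => c ≠ 0 ∧ T.parent c = i)

/-- The ancestor set `A(i)`: `A(0) = {0}` and `A(i) = {parent i} ∪ A(parent i)`. -/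
def ancestors (i : Fin (T.n + 1)) : Finset (Fin (T.n + 1)) :=
  if h : i = 0 then {0} else insert (T.parent i) (ancestors (T.parent i))
termination_by (i : ℕ)
decreasing_by exact T.parent_lt i h

/-- The entitlement of node `i` relative to the root: `R i = ∏_{a ∈ A(i) ∪ {i}} W a`. -/
def R (i : Fin (T.n + 1)) : ℝ := ∏ a ∈ insert i (T.ancestors i), T.W a

/-- `V` is an allocation of `h` seats. -/
def IsAlloc (h : ℕ) (V : Fin (T.n + 1) → ℕ) : Prop :=
  V 0 = h ∧ ∀ i, (T.children i).Nonempty → V i = ∑ c ∈ T.children i, V c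

/-- `V` fulfills lower quota: `V i ≥ LQ i = max_{a ∈ A(i)} ⌊(R i / R a) · V a⌋`. -/
def FulfillsLowerQuota (V : Fin (T.n + 1) → ℕ) : Prop :=
  ∀ i, ∀ a ∈ T.ancestors i, ⌊T.R i / T.R a * (V a : ℝ)⌋ ≤ (V i : ℤ)

/-- `V` fulfills upper quota: `V i ≤ UQ i = min_{a ∈ A(i)} ⌈(R i / R a) · V a⌉`. -/
def FulfillsUpperQuota (V : Fin (T.n + 1) → ℕ) : Prop :=
  ∀ i, ∀ a ∈ T.ancestors i, (V i : ℤ) ≤ ⌈T.R i / T.R a * (V a : ℝ)⌉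


/-- `P` is the set of nodes receiving the new seat in one step of an iterative
method with selection criterion `crit` (to be minimized among children) and
eligibility constraint `elig`: `P` is a root-to-leaf path, each non-root node on
the path is an eligible child of its parent minimizing `crit` among all eligible
children, and the seat counts along `P` each increase by one. -/
def IsStepWith (crit : (Fin (T.n + 1) → ℕ) → Fin (T.n + 1) → ℝ)
    (elig : (Fin (T.n + 1) → ℕ) → Fin (T.n + 1) → Prop)
    (P : Finset (Fin (T.n + 1))) (Vh Vh1 : Fin (T.n + 1) → ℕ) : Prop :=
  (0 : Fin (T.n + 1)) ∈ P ∧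
  (∀ i ∈ P, i ≠ 0 → T.parent i ∈ P) ∧
  (∀ i ∈ P, (T.children i).Nonempty → ∃ c ∈ T.children i, c ∈ P) ∧
  (∀ c ∈ P, ∀ d ∈ P, c ≠ 0 → d ≠ 0 → T.parent c = T.parent d → c = d) ∧
  (∀ c ∈ P, c ≠ 0 → elig Vh c ∧
    ∀ d ∈ T.children (T.parent c), elig Vh d → crit Vh c ≤ crit Vh d) ∧
  (∀ i, Vh1 i = Vh i + if i ∈ P then 1 else 0)

/-- `V : ℕ → (nodes → ℕ)` is a run of the iterative method given by `crit` and
`elig` (with arbitrary tie-breaking): `V 0` is the all-zero allocation and each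
`V (h+1)` is obtained from `V h` by allocating one more seat along a path. -/
def IsRun (crit : (Fin (T.n + 1) → ℕ) → Fin (T.n + 1) → ℝ)
    (elig : (Fin (T.n + 1) → ℕ) → Fin (T.n + 1) → Prop)
    (V : ℕ → Fin (T.n + 1) → ℕ) : Prop :=
  (∀ i, V 0 i = 0) ∧ ∀ h, ∃ P, T.IsStepWith crit elig P (V h) (V (h + 1))

/-- Adams' criterion: a child `c` minimizing `V c / R c` receives the seat. -/
noncomputable def adamsCrit (V : Fin (T.n + 1) → ℕ) (c : Fin (T.n + 1)) : ℝ :=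
  (V c : ℝ) / T.R c

/-- Jefferson's criterion: a child `c` minimizing `(V c + 1) / R c` receives the seat. -/
noncomputable def jeffersonCrit (V : Fin (T.n + 1) → ℕ) (c : Fin (T.n + 1)) : ℝ :=
  ((V c : ℝ) + 1) / T.R c

/-- Trivial eligibility constraint: every child is eligible. -/
def trivElig (_ : Fin (T.n + 1) → ℕ) (_ : Fin (T.n + 1)) : Prop := True

/-- Eligibility constraint of the quota method: `V c / W c < V (parent c) + 1`. -/
def quotaElig (V : Fin (T.n + 1) → ℕ) (c : Fin (T.n + 1)) : Prop :=
  (V c : ℝ) / T.W c < (V (T.parent c) : ℝ) + 1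

/-- Eligibility constraint of the upper-compliant quota method:
`V c / R c < (V a + 1) / R a` for every ancestor `a` of `c`. -/
def ucElig (V : Fin (T.n + 1) → ℕ) (c : Fin (T.n + 1)) : Prop :=
  ∀ a ∈ T.ancestors c, (V c : ℝ) / T.R c < ((V a : ℝ) + 1) / T.R a

end MLA

/-!
The claim is `W c * (V p + 1) ≤ V c + 1` before the seat is passed from `p` to `c`, which concerns
only the children of `p`. Up to the common factor `R p`, the selection criterion of a child with
entitlement `w` and `v` seats is `(v + 1) / w`; read it as the price of its next seat. The invariant
is that, if every child were to buy all the seats it can get at a price below `x`, for an integer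
`x` exceeding the number of seats allocated so far, then fewer than `x` seats would be allocated
altogether. A seat bought below `x` does not affect this count. If a seat is bought at a price at
least `x`, then no eligible child would buy another seat below `x`, while an ineligible child
already holds its quota of the new house size and would gain less than its share of the `x - (house
size)` remaining seats. Taking `x` to be the house size plus one, the invariant says that nobody can
buy at all below `x`, which is the claim.
-/

section JeffersonFill

/-- The number of seats held by a party of weight `w`, starting from `v` seats, after it has bought
seats as long as its Jefferson price `(seats + 1) / w` is below `x`. The truncated subtraction is
intended: a party with `w * x ≤ 0` buys nothing. -/
noncomputable def jeffersonFill (w x : ℝ) (v : ℕ) : ℕ := max v (⌈w * x⌉₊ - 1)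

variable {w x : ℝ} {v m : ℕ}

theorem jeffersonFill_le_iff : jeffersonFill w x v ≤ m ↔ v ≤ m ∧ w * x ≤ m + 1 := by
  rw [jeffersonFill, max_le_iff, Nat.sub_le_iff_le_add, Nat.ceil_le, Nat.cast_add_one]

theorem le_jeffersonFill : v ≤ jeffersonFill w x v := le_max_left _ _

theorem jeffersonFill_eq_self (hx : w * x ≤ v + 1) : jeffersonFill w x v = v :=
  le_antisymm (jeffersonFill_le_iff.2 ⟨le_rfl, hx⟩) le_jeffersonFill

theorem jeffersonFill_add_one (hx : (v : ℝ) + 1 < w * x) :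
    jeffersonFill w x (v + 1) = jeffersonFill w x v := by
  have hceil : v + 1 < ⌈w * x⌉₊ := Nat.lt_ceil.2 (by exact_mod_cast hx)
  unfold jeffersonFill
  omega

theorem jeffersonFill_lt {y : ℝ} (hv : v < y) (hx : w * x ≤ y) : jeffersonFill w x v < y := by
  rcases max_choice v (⌈w * x⌉₊ - 1) with hmax | hmax <;> rw [jeffersonFill, hmax]
  · exact hv
  · rcases Nat.eq_zero_or_pos ⌈w * x⌉₊ with hceil | hceil
    · rw [hceil]
      exact (Nat.cast_le.2 (Nat.zero_le v)).trans_lt hv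
    · exact (Nat.lt_ceil.1 (Nat.sub_one_lt_of_lt hceil)).trans_le hx

theorem jeffersonFill_lt_add_mul {a : ℝ} (hw : 0 < w) (hax : a < x)
    (h : w * x ≤ v + 1 ∨ w * a ≤ v) : (jeffersonFill w x v : ℝ) < v + w * (x - a) := by
  have hgain : 0 < w * (x - a) := mul_pos hw (sub_pos.2 hax)
  rcases h with hprice | hquota
  · rw [jeffersonFill_eq_self hprice]
    exact lt_add_of_pos_right _ hgain
  · exact jeffersonFill_lt (lt_add_of_pos_right _ hgain) (by linarith [mul_sub w x a])

end JeffersonFill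

section IsJeffersonBounded

variable {ι : Type*} {s : Finset ι} {w : ι → ℝ} {v v' : ι → ℕ} {d : ι}

/-- The invariant of the quota method among the children `s` of one node: for every integer price
`x` above the number of allocated seats, buying all seats below price `x` leads to a house of
fewer than `x` seats. -/
def IsJeffersonBounded (s : Finset ι) (w : ι → ℝ) (v : ι → ℕ) : Prop :=
  ∀ x : ℕ, ∑ e ∈ s, v e < x → ∑ e ∈ s, jeffersonFill (w e) x (v e) < x

theorem isJeffersonBounded_of_eq_zero (hw : ∀ e ∈ s, 0 < w e) (hsum : ∑ e ∈ s, w e = 1)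
    (hv : ∀ e ∈ s, v e = 0) : IsJeffersonBounded s w v := by
  intro x hx
  have hx_pos : (0 : ℝ) < x := Nat.cast_pos.2 (Nat.zero_lt_of_lt hx)
  have hs : s.Nonempty := Finset.nonempty_of_sum_ne_zero (hsum.trans_ne one_ne_zero)
  have hfill : ∀ e ∈ s, (jeffersonFill (w e) x (v e) : ℝ) < w e * x := fun e he =>
    jeffersonFill_lt (by simpa only [hv e he, Nat.cast_zero] using mul_pos (hw e he) hx_pos) le_rfl
  have hlt := Finset.sum_lt_sum_of_nonempty hs hfill
  rw [← Finset.sum_mul, hsum, one_mul] at hlt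
  exact_mod_cast hlt

theorem IsJeffersonBounded.mul_sum_add_one_le (h : IsJeffersonBounded s w v) {c : ι} (hc : c ∈ s) :
    w c * ((∑ e ∈ s, v e : ℕ) + 1) ≤ v c + 1 := by
  have hsum : ∑ e ∈ s, v e = ∑ e ∈ s, jeffersonFill (w e) ((∑ e ∈ s, v e : ℕ) + 1) (v e) :=
    le_antisymm (Finset.sum_le_sum fun _ _ => le_jeffersonFill)
      (Nat.lt_succ_iff.1 (by exact_mod_cast h _ (Nat.lt_succ_self _)))
  have hfill := (Finset.sum_eq_sum_iff_of_le fun _ _ => le_jeffersonFill).1 hsum c hc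
  exact (jeffersonFill_le_iff.1 hfill.ge).2

variable [DecidableEq ι]

theorem sum_eq_sum_add_one_of_eq_add_single (hd : d ∈ s)
    (hv' : ∀ e ∈ s, v' e = v e + (Pi.single d 1 : ι → ℕ) e) :
    ∑ e ∈ s, v' e = ∑ e ∈ s, v e + 1 := by
  rw [Finset.sum_congr rfl hv', Finset.sum_add_distrib, Finset.sum_pi_single', if_pos hd]

theorem IsJeffersonBounded.add_single (h : IsJeffersonBounded s w v) (hw : ∀ e ∈ s, 0 < w e)
    (hsum : ∑ e ∈ s, w e = 1) (hd : d ∈ s)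
    (hv' : ∀ e ∈ s, v' e = v e + (Pi.single d 1 : ι → ℕ) e)
    (hmin : ∀ e ∈ s, v e / w e < (∑ e ∈ s, v e : ℕ) + 1 → (v d + 1) / w d ≤ (v e + 1) / w e) :
    IsJeffersonBounded s w v' := by
  intro x hx
  have htotal := sum_eq_sum_add_one_of_eq_add_single hd hv'
  rcases lt_or_ge ((v d : ℝ) + 1) (w d * x) with hcheap | hexpensive
  · have hfill : ∀ e ∈ s, jeffersonFill (w e) x (v' e) = jeffersonFill (w e) x (v e) := by
      intro e he
      rcases eq_or_ne e d with rfl | hed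
      · rw [hv' e he, Pi.single_eq_same, jeffersonFill_add_one hcheap]
      · rw [hv' e he, Pi.single_eq_of_ne hed, add_zero]
    rw [Finset.sum_congr rfl hfill]
    exact h x (by omega)
  · have hle : ∀ e ∈ s, (v e : ℝ) ≤ v' e := fun e he => by
      exact_mod_cast (Nat.le_add_right _ _).trans_eq (hv' e he).symm
    have hfill : ∀ e ∈ s, (jeffersonFill (w e) x (v' e) : ℝ) <
        v' e + w e * (x - (∑ e ∈ s, v' e : ℕ)) := by
      intro e he
      refine jeffersonFill_lt_add_mul (hw e he) (Nat.cast_lt.2 hx) ?_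
      by_cases helig : v e / w e < (∑ e ∈ s, v e : ℕ) + (1 : ℝ)
      · left
        have hprice : (x : ℝ) ≤ (v e + 1) / w e :=
          ((le_div_iff₀' (hw d hd)).2 hexpensive).trans (hmin e he helig)
        linarith [(le_div_iff₀' (hw e he)).1 hprice, hle e he]
      · right
        rw [htotal, Nat.cast_add_one]
        exact ((le_div_iff₀' (hw e he)).1 (not_lt.1 helig)).trans (hle e he)
    have hs : s.Nonempty := ⟨d, hd⟩
    have hlt := Finset.sum_lt_sum_of_nonempty hs hfill
    rw [Finset.sum_add_distrib, ← Finset.sum_mul, hsum, one_mul, Nat.cast_sum s v',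
      add_sub_cancel] at hlt
    exact_mod_cast hlt

end IsJeffersonBounded

namespace MLA

section Tree

variable {T : MLA} {c p : Fin (T.n + 1)}

theorem mem_children : c ∈ T.children p ↔ c ≠ 0 ∧ T.parent c = p := by
  simp only [children, Finset.mem_filter, Finset.mem_univ, true_and]

theorem ancestors_of_ne_zero (hc : c ≠ 0) :
    T.ancestors c = insert (T.parent c) (T.ancestors (T.parent c)) := by
  rw [ancestors, dif_neg hc]

theorem le_of_mem_ancestors (i : Fin (T.n + 1)) : ∀ a ∈ T.ancestors i, a ≤ i := by
  induction i using WellFoundedLT.induction with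
  | ind i ih =>
    intro a ha
    rcases eq_or_ne i 0 with rfl | hi
    · rw [ancestors, dif_pos rfl, Finset.mem_singleton] at ha
      exact ha.le
    · have hparent : T.parent i < i := T.parent_lt i hi
      rw [ancestors_of_ne_zero hi] at ha
      rcases Finset.mem_insert.1 ha with rfl | ha
      · exact hparent.le
      · exact (ih _ hparent a ha).trans hparent.le

theorem R_pos (i : Fin (T.n + 1)) : 0 < T.R i :=
  Finset.prod_pos fun a _ => T.W_pos a

theorem R_eq_W_mul_R_parent (hc : c ≠ 0) : T.R c = T.W c * T.R (T.parent c) := by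
  have hparent : T.parent c < c := T.parent_lt c hc
  have hnotMem : c ∉ insert (T.parent c) (T.ancestors (T.parent c)) := by
    intro hmem
    rcases Finset.mem_insert.1 hmem with heq | hanc
    · exact hparent.ne' heq
    · exact hparent.not_ge (le_of_mem_ancestors _ c hanc)
  rw [R, ancestors_of_ne_zero hc, Finset.prod_insert hnotMem, R]

theorem div_R_parent_le_div_R_iff (hc : c ≠ 0) {x y : ℝ} :
    x / T.R (T.parent c) ≤ y / T.R c ↔ T.W c * x ≤ y := by
  rw [R_eq_W_mul_R_parent hc, ← div_div, div_le_div_iff_of_pos_right (R_pos _),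
    le_div_iff₀' (T.W_pos c)]

theorem jeffersonCrit_le_jeffersonCrit_iff {V : Fin (T.n + 1) → ℕ} {d : Fin (T.n + 1)}
    (hc : c ∈ T.children p) (hd : d ∈ T.children p) :
    T.jeffersonCrit V c ≤ T.jeffersonCrit V d ↔
      ((V c : ℝ) + 1) / T.W c ≤ ((V d : ℝ) + 1) / T.W d := by
  obtain ⟨hc0, hcp⟩ := mem_children.1 hc
  obtain ⟨hd0, hdp⟩ := mem_children.1 hd
  rw [jeffersonCrit, jeffersonCrit, R_eq_W_mul_R_parent hc0, R_eq_W_mul_R_parent hd0, hcp, hdp,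
    ← div_div, ← div_div, div_le_div_iff_of_pos_right (R_pos p)]

end Tree

section Step

variable {T : MLA} {crit : (Fin (T.n + 1) → ℕ) → Fin (T.n + 1) → ℝ}
  {elig : (Fin (T.n + 1) → ℕ) → Fin (T.n + 1) → Prop} {P : Finset (Fin (T.n + 1))}
  {U U' : Fin (T.n + 1) → ℕ} {i p c d : Fin (T.n + 1)}

theorem IsStepWith.apply_of_mem (h : T.IsStepWith crit elig P U U') (hi : i ∈ P) :
    U' i = U i + 1 := by
  rw [h.2.2.2.2.2 i, if_pos hi]

theorem IsStepWith.apply_of_notMem (h : T.IsStepWith crit elig P U U') (hi : i ∉ P) :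
    U' i = U i := by
  rw [h.2.2.2.2.2 i, if_neg hi, add_zero]

theorem IsStepWith.parent_mem (h : T.IsStepWith crit elig P U U') (hc : c ∈ P) (hc0 : c ≠ 0) :
    T.parent c ∈ P :=
  h.2.1 c hc hc0

theorem IsStepWith.crit_le (h : T.IsStepWith crit elig P U U') (hd : d ∈ T.children p)
    (hdP : d ∈ P) (hc : c ∈ T.children p) (helig : elig U c) : crit U d ≤ crit U c := by
  obtain ⟨hd0, rfl⟩ := mem_children.1 hd
  exact (h.2.2.2.2.1 d hdP hd0).2 c hc helig

theorem IsStepWith.children_apply_of_notMem (h : T.IsStepWith crit elig P U U') (hp : p ∉ P) :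
    ∀ c ∈ T.children p, U' c = U c := by
  intro c hc
  obtain ⟨hc0, rfl⟩ := mem_children.1 hc
  exact h.apply_of_notMem fun hcP => hp (h.parent_mem hcP hc0)

theorem IsStepWith.exists_child_eq_add_single (h : T.IsStepWith crit elig P U U') (hp : p ∈ P)
    (hchildren : (T.children p).Nonempty) :
    ∃ d ∈ T.children p, d ∈ P ∧
      ∀ c ∈ T.children p, U' c = U c + (Pi.single d 1 : Fin (T.n + 1) → ℕ) c := by
  obtain ⟨d, hd, hdP⟩ := h.2.2.1 p hp hchildren
  obtain ⟨hd0, hdp⟩ := mem_children.1 hd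
  refine ⟨d, hd, hdP, fun c hc => ?_⟩
  obtain ⟨hc0, hcp⟩ := mem_children.1 hc
  rcases eq_or_ne c d with rfl | hcd
  · rw [h.apply_of_mem hdP, Pi.single_eq_same]
  · have hcP : c ∉ P := fun hcP => hcd (h.2.2.2.1 c hcP d hdP hc0 hd0 (hcp.trans hdp.symm))
    rw [h.apply_of_notMem hcP, Pi.single_eq_of_ne hcd, add_zero]

theorem IsStepWith.isAlloc_add_one (h : T.IsStepWith crit elig P U U') {n : ℕ}
    (hU : T.IsAlloc n U) : T.IsAlloc (n + 1) U' := by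
  refine ⟨by rw [h.apply_of_mem h.1, hU.1], fun p hchildren => ?_⟩
  by_cases hp : p ∈ P
  · obtain ⟨d, hd, -, hU'⟩ := h.exists_child_eq_add_single hp hchildren
    rw [h.apply_of_mem hp, hU.2 p hchildren, sum_eq_sum_add_one_of_eq_add_single hd hU']
  · rw [h.apply_of_notMem hp, hU.2 p hchildren,
      Finset.sum_congr rfl (h.children_apply_of_notMem hp)]

theorem IsStepWith.isJeffersonBounded (h : T.IsStepWith T.jeffersonCrit elig P U U')
    (helig : ∀ c, T.quotaElig U c → elig U c) {n : ℕ} (hU : T.IsAlloc n U)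
    (hchildren : (T.children p).Nonempty) (hbound : IsJeffersonBounded (T.children p) T.W U) :
    IsJeffersonBounded (T.children p) T.W U' := by
  by_cases hp : p ∈ P
  · obtain ⟨d, hd, hdP, hU'⟩ := h.exists_child_eq_add_single hp hchildren
    refine hbound.add_single (fun e _ => T.W_pos e) (T.W_sum p hchildren) hd hU'
      fun e he hquota => ?_
    rw [← hU.2 p hchildren, ← (mem_children.1 he).2] at hquota
    exact (jeffersonCrit_le_jeffersonCrit_iff hd he).1 (h.crit_le hd hdP he (helig e hquota))
  · intro x
    rw [Finset.sum_congr rfl (h.children_apply_of_notMem hp), Finset.sum_congr rfl fun e he =>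
      congrArg (jeffersonFill (T.W e) x) (h.children_apply_of_notMem hp e he)]
    exact hbound x

end Step

section Run

variable {T : MLA} {crit : (Fin (T.n + 1) → ℕ) → Fin (T.n + 1) → ℝ}
  {elig : (Fin (T.n + 1) → ℕ) → Fin (T.n + 1) → Prop} {V : ℕ → Fin (T.n + 1) → ℕ}

theorem IsRun.isAlloc (hrun : T.IsRun crit elig V) (h : ℕ) : T.IsAlloc h (V h) := by
  induction h with
  | zero => exact ⟨hrun.1 0, fun p _ => by simp only [hrun.1, Finset.sum_const_zero]⟩
  | succ h ih =>
    obtain ⟨P, hP⟩ := hrun.2 h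
    exact hP.isAlloc_add_one ih

theorem IsRun.isJeffersonBounded (hrun : T.IsRun T.jeffersonCrit elig V)
    (helig : ∀ U c, T.quotaElig U c → elig U c) (h : ℕ) {p : Fin (T.n + 1)}
    (hchildren : (T.children p).Nonempty) : IsJeffersonBounded (T.children p) T.W (V h) := by
  induction h with
  | zero =>
    exact isJeffersonBounded_of_eq_zero (fun e _ => T.W_pos e) (T.W_sum p hchildren)
      fun e _ => hrun.1 e
  | succ h ih =>
    obtain ⟨P, hP⟩ := hrun.2 h
    exact hP.isJeffersonBounded (helig (V h)) (hrun.isAlloc h) hchildren ih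

theorem IsRun.W_mul_parent_add_one_le (hrun : T.IsRun T.jeffersonCrit elig V)
    (helig : ∀ U c, T.quotaElig U c → elig U c) (h : ℕ) {c : Fin (T.n + 1)} (hc0 : c ≠ 0) :
    T.W c * ((V h (T.parent c) : ℝ) + 1) ≤ V h c + 1 := by
  have hc : c ∈ T.children (T.parent c) := mem_children.2 ⟨hc0, rfl⟩
  rw [(hrun.isAlloc h).2 _ ⟨c, hc⟩]
  exact (hrun.isJeffersonBounded helig h ⟨c, hc⟩).mul_sum_add_one_le hc

end Run

end MLA

/-- With the trivial eligibility constraint this is the corresponding fact for the multi-level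
Jefferson method. -/
theorem quota_method_just_received_ratio_general (T : MLA)
    (elig : (Fin (T.n + 1) → ℕ) → Fin (T.n + 1) → Prop)
    (helig : ∀ U c, T.quotaElig U c → elig U c) (V : ℕ → Fin (T.n + 1) → ℕ)
    (hrun : T.IsRun T.jeffersonCrit elig V) (h : ℕ) (P : Finset (Fin (T.n + 1)))
    (V' : Fin (T.n + 1) → ℕ) (hP : T.IsStepWith T.jeffersonCrit elig P (V h) V')
    (c : Fin (T.n + 1)) (hc : c ∈ P) (hc0 : c ≠ 0) :
    (V' (T.parent c) : ℝ) / T.R (T.parent c) ≤ (V' c : ℝ) / T.R c := by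
  rw [MLA.div_R_parent_le_div_R_iff hc0, hP.apply_of_mem hc,
    hP.apply_of_mem (hP.parent_mem hc hc0), Nat.cast_add_one, Nat.cast_add_one]
  exact hrun.W_mul_parent_add_one_le helig h hc0

/-- In any run of the multi-level quota method, whenever a
non-root node `c` (with parent `p`) has just received the `g`-th seat (`g ≥ 1`,
`c` among the recipients `P` of that seat), the resulting allocation satisfies
`V^g_c / R_c ≥ V^g_p / R_p`. -/
theorem quota_method_just_received_ratio (T : MLA) (V : ℕ → Fin (T.n + 1) → ℕ)
    (hrun : T.IsRun T.jeffersonCrit T.quotaElig V) (g : ℕ) (hg : 1 ≤ g)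
    (P : Finset (Fin (T.n + 1)))
    (hP : T.IsStepWith T.jeffersonCrit T.quotaElig P (V (g - 1)) (V g))
    (c : Fin (T.n + 1)) (hc : c ∈ P) (hc0 : c ≠ 0) :
    (V g (T.parent c) : ℝ) / T.R (T.parent c) ≤ (V g c : ℝ) / T.R c :=
  quota_method_just_received_ratio_general T T.quotaElig (fun _ _ h => h) V hrun (g - 1) P (V g) hP
    c hc hc0
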